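/- Let (X,G) be a symmetric G-metric space and T: X → X with X T-orbitally complete. Suppose x* ∈ X is such that for any three elements x,y,z of the orbit closure I(x*,T) ∪ {ξ} (where ξ = lim T^n x*, assumed to exist), at least one of conditions (i) G(x,Tx,Tx)+G(y,Ty,Ty)+G(z,Tz,Tz) ≤ α G(x,y,z), 1 ≤ α < 3; (ii) the sum ≤ β[G(Tx,y,z)+G(x,Ty,z)+G(x,y,Tz)], 1/2 ≤ β < 1; (iii) G(Tx,Ty,Tz) ≤ δ max{G(x,y,z), G(x,Tx,Tx), G(y,Ty,Ty), G(z,Tz,Tz), (1/4)[G(Tx,y,z)+G(x,Ty,z)+G(x,y,Tz)]}, 0 ≤ δ < 1/2, holds for the triples (T^n x*, ξ, ξ). If additionally d_n = G(T^n x*, T^{n+1} x*, T^{n+1} x*) → 0 and T^n x* → ξ, then T ξ = ξ. -/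

import Mathlib

open Filter Topology Function

structure GMetricSpace (X : Type*) where
  G : X → X → X → ℝ
  nonneg : ∀ x y z, 0 ≤ G x y z
  eq_zero_iff : ∀ x y z, G x y z = 0 ↔ x = y ∧ y = z
  le_of_ne : ∀ x y z, z ≠ y → G x x y ≤ G x y z
  symm_swap : ∀ x y z, G x y z = G x z y
  symm_cycle : ∀ x y z, G x y z = G y z x
  rect : ∀ x y z a, G x y z ≤ G x a a + G a y z

/-- `(x_n)` G-converges to `x`. -/
def GConv {X : Type*} (g : GMetricSpace X) (s : ℕ → X) (x : X) : Prop :=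
  Tendsto (fun n => g.G x (s n) (s n)) atTop (𝓝 0)

/-- `(x_n)` is a G-Cauchy sequence. -/
def GCauchy {X : Type*} (g : GMetricSpace X) (s : ℕ → X) : Prop :=
  ∀ ε > 0, ∃ N, ∀ m ≥ N, ∀ n ≥ N, g.G (s n) (s m) (s m) < ε

/-- `(X,G)` is a symmetric G-metric space. -/
def GSymmetric {X : Type*} (g : GMetricSpace X) : Prop :=
  ∀ x y, g.G x y y = g.G x x y

/-- `T` is orbitally continuous. -/
def OrbContinuous {X : Type*} (g : GMetricSpace X) (T : X → X) : Prop :=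
  ∀ (x xs : X) (φ : ℕ → ℕ), StrictMono φ →
    GConv g (fun i => T^[φ i] x) xs → GConv g (fun i => T (T^[φ i] x)) (T xs)

/-- `X` is `T`-orbitally complete. -/
def TOrbComplete {X : Type*} (g : GMetricSpace X) (T : X → X) : Prop :=
  ∀ (a : X) (s : ℕ → X), (∀ i, ∃ k, s i = T^[k] a) → GCauchy g s → ∃ u, GConv g s u

/-!
The function `G` is jointly continuous for `G`-convergence, so each of the three inequalities may be
passed to the limit along the orbit of `xs`, which converges to `ξ`. Writing `D = G ξ (T ξ) (T ξ)`,
the limits are `2 D ≤ 0`, `2 D ≤ 2 β D` (by symmetry) and `D ≤ δ D`, each of which forces `D = 0`.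
At least one of the three inequalities holds infinitely often, which is enough to take its limit.
-/

namespace GMetricSpace

variable {X : Type*} (g : GMetricSpace X)

theorem G_self (x : X) : g.G x x x = 0 :=
  (g.eq_zero_iff x x x).2 ⟨rfl, rfl⟩

theorem G_right_right_le_two_mul (x y : X) : g.G x y y ≤ 2 * g.G y x x := by
  have hcycle : g.G x y y = g.G y y x := g.symm_cycle x y y
  have hswap : g.G x y x = g.G y x x := g.symm_cycle x y x
  linarith [g.rect y y x x]

theorem G_le_add (x y z x' y' z' : X) :
    g.G x y z ≤ g.G x x' x' + g.G y y' y' + g.G z z' z' + g.G x' y' z' := by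
  calc g.G x y z ≤ g.G x x' x' + g.G x' y z := g.rect x y z x'
    _ = g.G x x' x' + g.G y z x' := by rw [g.symm_cycle x' y z]
    _ ≤ g.G x x' x' + (g.G y y' y' + g.G y' z x') := by gcongr; exact g.rect y z x' y'
    _ = g.G x x' x' + (g.G y y' y' + g.G z x' y') := by rw [g.symm_cycle y' z x']
    _ ≤ g.G x x' x' + (g.G y y' y' + (g.G z z' z' + g.G z' x' y')) := by
      gcongr; exact g.rect z x' y' z'
    _ = g.G x x' x' + g.G y y' y' + g.G z z' z' + g.G x' y' z' := by
      rw [g.symm_cycle z' x' y']; ring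

theorem dist_G_le (x y z x' y' z' : X) :
    dist (g.G x y z) (g.G x' y' z') ≤ 2 * (g.G x' x x + g.G y' y y + g.G z' z z) := by
  rw [Real.dist_eq, abs_sub_le_iff]
  constructor
  · linarith [g.G_le_add x y z x' y' z', g.G_right_right_le_two_mul x x',
      g.G_right_right_le_two_mul y y', g.G_right_right_le_two_mul z z']
  · linarith [g.G_le_add x' y' z' x y z, g.nonneg x' x x, g.nonneg y' y y, g.nonneg z' z z]

/-- The displacement `G x (T x) (T x)` of a point `x` under a self-map `T`; it vanishes exactly at
the fixed points of `T`. -/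
def displacement (T : X → X) (x : X) : ℝ :=
  g.G x (T x) (T x)

/-- The sum of the three values of `G` at the triples obtained from `(x, y, z)` by applying `T` to
a single entry. -/
def crossSum (T : X → X) (x y z : X) : ℝ :=
  g.G (T x) y z + g.G x (T y) z + g.G x y (T z)

/-- The Ćirić-type maximum that bounds `G (T x) (T y) (T z)` in condition (iii). -/
noncomputable def ciricMax (T : X → X) (x y z : X) : ℝ :=
  max (g.G x y z) (max (g.displacement T x) (max (g.displacement T y)
    (max (g.displacement T z) (1 / 4 * g.crossSum T x y z))))

variable {g} {T : X → X} {x : X}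

theorem displacement_nonneg : 0 ≤ g.displacement T x :=
  g.nonneg x (T x) (T x)

theorem displacement_eq_zero_iff : g.displacement T x = 0 ↔ IsFixedPt T x :=
  (g.eq_zero_iff x (T x) (T x)).trans ⟨fun h => h.1.symm, fun h => ⟨h.symm, rfl⟩⟩

theorem isFixedPt_of_displacement_le_mul {c : ℝ} (hc : c < 1)
    (h : g.displacement T x ≤ c * g.displacement T x) : IsFixedPt T x := by
  refine (displacement_eq_zero_iff (g := g)).1 ?_
  by_contra hne
  exact h.not_gt (mul_lt_of_lt_one_left (displacement_nonneg.lt_of_ne' hne) hc)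

end GMetricSpace

namespace GConv

open GMetricSpace

variable {X : Type*} {g : GMetricSpace X} {T : X → X} {s t u : ℕ → X} {x y z ξ : X}

theorem const (g : GMetricSpace X) (x : X) : GConv g (fun _ => x) x := by
  simp only [GConv, g.G_self, tendsto_const_nhds]

theorem tendsto_G (hs : GConv g s x) (ht : GConv g t y) (hu : GConv g u z) :
    Tendsto (fun n => g.G (s n) (t n) (u n)) atTop (𝓝 (g.G x y z)) := by
  refine tendsto_iff_dist_tendsto_zero.2
    (squeeze_zero (fun _ => dist_nonneg) (fun n => g.dist_G_le _ _ _ x y z) ?_)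
  simpa only [add_zero, mul_zero] using ((hs.add ht).add hu).const_mul 2

theorem tendsto_displacement (hs : GConv g s ξ) (hTs : GConv g (fun n => T (s n)) ξ) :
    Tendsto (fun n => g.displacement T (s n)) atTop (𝓝 0) :=
  g.G_self ξ ▸ hs.tendsto_G hTs hTs

theorem tendsto_G_self_self (hs : GConv g s ξ) :
    Tendsto (fun n => g.G (s n) ξ ξ) atTop (𝓝 0) :=
  g.G_self ξ ▸ hs.tendsto_G (const g ξ) (const g ξ)

theorem tendsto_crossSum (hs : GConv g s ξ) (hTs : GConv g (fun n => T (s n)) ξ) :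
    Tendsto (fun n => g.crossSum T (s n) ξ ξ) atTop (𝓝 (2 * g.G ξ ξ (T ξ))) := by
  have hlim := (hTs.tendsto_G_self_self.add (hs.tendsto_G (const g (T ξ)) (const g ξ))).add
    (hs.tendsto_G (const g ξ) (const g (T ξ)))
  rwa [g.symm_swap ξ (T ξ) ξ, zero_add, ← two_mul] at hlim

theorem tendsto_ciricMax (hs : GConv g s ξ) (hTs : GConv g (fun n => T (s n)) ξ) :
    Tendsto (fun n => g.ciricMax T (s n) ξ ξ) atTop (𝓝 (g.displacement T ξ)) := by
  have hcross : 1 / 4 * (2 * g.G ξ ξ (T ξ)) ≤ g.displacement T ξ := by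
    have hle : g.G ξ ξ (T ξ) ≤ 2 * g.displacement T ξ := by
      rw [← g.symm_cycle (T ξ) ξ ξ]
      exact g.G_right_right_le_two_mul (T ξ) ξ
    linarith [displacement_nonneg (g := g) (T := T) (x := ξ)]
  have hlim := hs.tendsto_G_self_self.max ((hs.tendsto_displacement hTs).max
    ((tendsto_const_nhds (x := g.displacement T ξ)).max
      ((tendsto_const_nhds (x := g.displacement T ξ)).max
        ((hs.tendsto_crossSum hTs).const_mul (1 / 4)))))
  rwa [max_eq_left hcross, max_self, max_eq_right displacement_nonneg,
    max_eq_right displacement_nonneg] at hlim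

theorem tendsto_sum_displacement (hs : GConv g s ξ) (hTs : GConv g (fun n => T (s n)) ξ) :
    Tendsto (fun n => g.displacement T (s n) + g.displacement T ξ + g.displacement T ξ) atTop
      (𝓝 (2 * g.displacement T ξ)) := by
  simpa only [zero_add, two_mul] using
    ((hs.tendsto_displacement hTs).add_const (g.displacement T ξ)).add_const (g.displacement T ξ)

theorem isFixedPt_of_frequently_sum_le_mul_G {α : ℝ} (hs : GConv g s ξ)
    (hTs : GConv g (fun n => T (s n)) ξ)
    (h : ∃ᶠ n in atTop, g.displacement T (s n) + g.displacement T ξ + g.displacement T ξ ≤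
      α * g.G (s n) ξ ξ) : IsFixedPt T ξ := by
  have hle : 2 * g.displacement T ξ ≤ α * 0 :=
    le_of_tendsto_of_tendsto_of_frequently (hs.tendsto_sum_displacement hTs)
      (hs.tendsto_G_self_self.const_mul α) h
  exact isFixedPt_of_displacement_le_mul zero_lt_one (by linarith)

theorem isFixedPt_of_frequently_sum_le_mul_crossSum {β : ℝ} (hsym : GSymmetric g) (hβ : β < 1)
    (hs : GConv g s ξ) (hTs : GConv g (fun n => T (s n)) ξ)
    (h : ∃ᶠ n in atTop, g.displacement T (s n) + g.displacement T ξ + g.displacement T ξ ≤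
      β * g.crossSum T (s n) ξ ξ) : IsFixedPt T ξ := by
  have hle : 2 * g.displacement T ξ ≤ β * (2 * g.G ξ ξ (T ξ)) :=
    le_of_tendsto_of_tendsto_of_frequently (hs.tendsto_sum_displacement hTs)
      ((hs.tendsto_crossSum hTs).const_mul β) h
  have hdisp : g.G ξ ξ (T ξ) = g.displacement T ξ := (hsym ξ (T ξ)).symm
  rw [hdisp] at hle
  exact isFixedPt_of_displacement_le_mul hβ (by linarith)

theorem isFixedPt_of_frequently_G_le_mul_ciricMax {δ : ℝ} (hδ : δ < 1) (hs : GConv g s ξ)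
    (hTs : GConv g (fun n => T (s n)) ξ)
    (h : ∃ᶠ n in atTop, g.G (T (s n)) (T ξ) (T ξ) ≤ δ * g.ciricMax T (s n) ξ ξ) :
    IsFixedPt T ξ :=
  isFixedPt_of_displacement_le_mul hδ <|
    le_of_tendsto_of_tendsto_of_frequently (hTs.tendsto_G (const g (T ξ)) (const g (T ξ)))
      ((hs.tendsto_ciricMax hTs).const_mul δ) h

theorem apply_iterate {a : X} (h : GConv g (fun n => T^[n] a) ξ) :
    GConv g (fun n => T (T^[n] a)) ξ := by
  simpa only [GConv, iterate_succ_apply'] using (tendsto_add_atTop_iff_nat 1).2 h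

end GConv

theorem stmt_17_general {X : Type*} {g : GMetricSpace X} (hsym : GSymmetric g) {T : X → X}
    {s : ℕ → X} {ξ : X} {α β δ : ℝ} (hβ : β < 1) (hδ : δ < 1) (hs : GConv g s ξ)
    (hTs : GConv g (fun n => T (s n)) ξ)
    (hcond : ∃ᶠ n in atTop,
      g.displacement T (s n) + g.displacement T ξ + g.displacement T ξ ≤ α * g.G (s n) ξ ξ ∨
      g.displacement T (s n) + g.displacement T ξ + g.displacement T ξ ≤
        β * g.crossSum T (s n) ξ ξ ∨
      g.G (T (s n)) (T ξ) (T ξ) ≤ δ * g.ciricMax T (s n) ξ ξ) :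
    T ξ = ξ := by
  rw [frequently_or_distrib, frequently_or_distrib] at hcond
  rcases hcond with hsum | hcross | hmax
  · exact hs.isFixedPt_of_frequently_sum_le_mul_G hTs hsum
  · exact hs.isFixedPt_of_frequently_sum_le_mul_crossSum hsym hβ hTs hcross
  · exact hs.isFixedPt_of_frequently_G_le_mul_ciricMax hδ hTs hmax

theorem stmt_17 {X : Type*} (g : GMetricSpace X) (hsym : GSymmetric g)
    (T : X → X) (xs ξ : X) (hcomp : TOrbComplete g T)
    (α β δ : ℝ) (hα : 1 ≤ α ∧ α < 3) (hβ : 1/2 ≤ β ∧ β < 1) (hδ : 0 ≤ δ ∧ δ < 1/2)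
    (hcond : ∀ n : ℕ,
      (g.G (T^[n] xs) (T (T^[n] xs)) (T (T^[n] xs)) + g.G ξ (T ξ) (T ξ) + g.G ξ (T ξ) (T ξ)
        ≤ α * g.G (T^[n] xs) ξ ξ) ∨
      (g.G (T^[n] xs) (T (T^[n] xs)) (T (T^[n] xs)) + g.G ξ (T ξ) (T ξ) + g.G ξ (T ξ) (T ξ)
        ≤ β * (g.G (T (T^[n] xs)) ξ ξ + g.G (T^[n] xs) (T ξ) ξ + g.G (T^[n] xs) ξ (T ξ))) ∨
      (g.G (T (T^[n] xs)) (T ξ) (T ξ) ≤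
        δ * max (g.G (T^[n] xs) ξ ξ)
          (max (g.G (T^[n] xs) (T (T^[n] xs)) (T (T^[n] xs)))
            (max (g.G ξ (T ξ) (T ξ))
              (max (g.G ξ (T ξ) (T ξ))
                (1/4 * (g.G (T (T^[n] xs)) ξ ξ + g.G (T^[n] xs) (T ξ) ξ +
                  g.G (T^[n] xs) ξ (T ξ))))))))
    (hd : Tendsto (fun n : ℕ => g.G (T^[n] xs) (T^[n + 1] xs) (T^[n + 1] xs)) atTop (𝓝 0))
    (hconv : GConv g (fun n => T^[n] xs) ξ) :
    T ξ = ξ :=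
  stmt_17_general hsym hβ.2 (hδ.2.trans one_half_lt_one) hconv hconv.apply_iterate
    (Frequently.of_forall hcond)
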